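/- Let h be a Lie algebroid over A with anchor ρ, let ξ, η ∈ h satisfy ρ(ξ) = 0 and ρ(η) = 0, and suppose a, b ∈ A are such that a·ξ = b·ξ and a·η = b·η. Then for every v ∈ h one has (b·ρ(v)(a) − a·ρ(v)(b))·[ξ, η] = 0. (This is the abstract form of the obstruction computed in the paper's Example on the failure of fibrant replacements.) -/

import Mathlib

/-- A Lie algebroid over a commutative `k`-algebra `A` (the ungraded, degree-zero instance of
the dg-Lie algebroids of the paper): an `A`-module `g` equipped with a `k`-bilinear Lie bracket
and an `A`-linear anchor map `ρ : g → Der_k(A)` which is a morphism of `k`-Lie algebras and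
satisfies the Leibniz rule. -/
structure IsLieAlgebroid (k : Type*) [Field k] {A : Type*} [CommRing A] [Algebra k A]
    {g : Type*} [LieRing g] [LieAlgebra k g] [Module A g] [IsScalarTower k A g]
    (ρ : g →ₗ[A] Derivation k A A) : Prop where
  map_lie : ∀ X Y : g, ρ ⁅X, Y⁆ = ⁅ρ X, ρ Y⁆
  leibniz : ∀ (a : A) (X Y : g), ⁅X, a • Y⁆ = a • ⁅X, Y⁆ + ρ X a • Y

/-!
Put `c = a - b`, which kills `ξ` and `η`. Bracketing `c • ξ = 0` with `v` trades `ρ v c • ξ`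
for `-(c • ⁅v, ξ⁆)`. The kernel of the anchor is a Lie ideal on which the bracket is `A`-bilinear,
so `ρ v c • ⁅ξ, η⁆ = -⁅⁅v, ξ⁆, c • η⁆ = 0`. Since also `c • ⁅ξ, η⁆ = 0`, the claim follows from
`b * ρ v a - a * ρ v b = b * ρ v c - ρ v b * c`.
-/

namespace IsLieAlgebroid

variable {k : Type*} [Field k] {A : Type*} [CommRing A] [Algebra k A]
  {g : Type*} [LieRing g] [LieAlgebra k g] [Module A g] [IsScalarTower k A g]
  {ρ : g →ₗ[A] Derivation k A A}

theorem anchor_lie_eq_zero (H : IsLieAlgebroid k ρ) (v : g) {ξ : g} (hξ : ρ ξ = 0) :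
    ρ ⁅v, ξ⁆ = 0 := by
  rw [H.map_lie, hξ, lie_zero]

theorem lie_smul_of_anchor_eq_zero (H : IsLieAlgebroid k ρ) {X : g} (hX : ρ X = 0)
    (f : A) (Y : g) : ⁅X, f • Y⁆ = f • ⁅X, Y⁆ := by
  rw [H.leibniz, hX, Derivation.zero_apply, zero_smul, add_zero]

theorem smul_lie_of_anchor_eq_zero (H : IsLieAlgebroid k ρ) {Y : g} (hY : ρ Y = 0)
    (f : A) (X : g) : ⁅f • X, Y⁆ = f • ⁅X, Y⁆ := by
  rw [← lie_skew, H.lie_smul_of_anchor_eq_zero hY, ← smul_neg, lie_skew]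

theorem anchor_apply_smul_of_smul_eq_zero (H : IsLieAlgebroid k ρ) (v : g) {c : A} {ξ : g}
    (hc : c • ξ = 0) : ρ v c • ξ = -(c • ⁅v, ξ⁆) :=
  eq_neg_of_add_eq_zero_right (by rw [← H.leibniz, hc, lie_zero])

theorem smul_lie_eq_zero_of_smul_eq_zero (H : IsLieAlgebroid k ρ) {c : A} {ξ η : g}
    (hη : ρ η = 0) (hcξ : c • ξ = 0) : c • ⁅ξ, η⁆ = 0 := by
  rw [← H.smul_lie_of_anchor_eq_zero hη, hcξ, zero_lie]

theorem anchor_apply_smul_lie_eq_zero (H : IsLieAlgebroid k ρ) (v : g) {c : A} {ξ η : g}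
    (hξ : ρ ξ = 0) (hη : ρ η = 0) (hcξ : c • ξ = 0) (hcη : c • η = 0) :
    ρ v c • ⁅ξ, η⁆ = 0 :=
  calc ρ v c • ⁅ξ, η⁆
      = ⁅ρ v c • ξ, η⁆ := (H.smul_lie_of_anchor_eq_zero hη _ _).symm
    _ = -⁅c • ⁅v, ξ⁆, η⁆ := by rw [H.anchor_apply_smul_of_smul_eq_zero v hcξ, neg_lie]
    _ = -(c • ⁅⁅v, ξ⁆, η⁆) := by rw [H.smul_lie_of_anchor_eq_zero hη]
    _ = -⁅⁅v, ξ⁆, c • η⁆ := by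
        rw [H.lie_smul_of_anchor_eq_zero (H.anchor_lie_eq_zero v hξ)]
    _ = 0 := by rw [hcη, lie_zero, neg_zero]

end IsLieAlgebroid

theorem lie_algebroid_obstruction_general
    {k : Type*} [Field k] {A : Type*} [CommRing A] [Algebra k A]
    {h : Type*} [LieRing h] [LieAlgebra k h] [Module A h] [IsScalarTower k A h]
    {ρ : h →ₗ[A] Derivation k A A} (H : IsLieAlgebroid k ρ)
    {ξ η : h} (hξ : ρ ξ = 0) (hη : ρ η = 0)
    {a b : A} (hab₁ : a • ξ = b • ξ) (hab₂ : a • η = b • η) (v : h) :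
    (b * ρ v a - a * ρ v b) • ⁅ξ, η⁆ = 0 := by
  have hcξ : (a - b) • ξ = 0 := by rw [sub_smul, hab₁, sub_self]
  have hcη : (a - b) • η = 0 := by rw [sub_smul, hab₂, sub_self]
  have hcoeff : b * ρ v a - a * ρ v b = b * ρ v (a - b) - ρ v b * (a - b) := by
    rw [map_sub]; ring
  rw [hcoeff, sub_smul, mul_smul, mul_smul, H.anchor_apply_smul_lie_eq_zero v hξ hη hcξ hcη,
    H.smul_lie_eq_zero_of_smul_eq_zero hη hcξ, smul_zero, smul_zero, sub_zero]

/-- Let `h` be a Lie algebroid over `A` with anchor `ρ`, let `ξ, η ∈ h`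
satisfy `ρ ξ = 0` and `ρ η = 0`, and suppose `a, b ∈ A` are such that `a·ξ = b·ξ` and
`a·η = b·η`.  Then for every `v ∈ h` one has `(b·ρ(v)(a) − a·ρ(v)(b))·⁅ξ, η⁆ = 0`. -/
theorem lie_algebroid_obstruction
    (k : Type*) [Field k] [CharZero k]
    (A : Type*) [CommRing A] [Algebra k A]
    (h : Type*) [LieRing h] [LieAlgebra k h] [Module A h] [IsScalarTower k A h]
    (ρ : h →ₗ[A] Derivation k A A) (H : IsLieAlgebroid k ρ)
    (ξ η : h) (hξ : ρ ξ = 0) (hη : ρ η = 0)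
    (a b : A) (hab₁ : a • ξ = b • ξ) (hab₂ : a • η = b • η)
    (v : h) :
    (b * ρ v a - a * ρ v b) • ⁅ξ, η⁆ = 0 :=
  lie_algebroid_obstruction_general H hξ hη hab₁ hab₂ v
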